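/- arXiv:1401.0012 — 8 statements merged into one kernel-verified Lean document; each statement's English description precedes it below -/
import Mathlib

section
/- Define F : List Bool → ℚ recursively by F([]) = 1, F(false :: w) = F(w)/(F(w)+1), and F(true :: w) = F(w)+1. Then F is injective, and the range of F is exactly the set of positive rational numbers. (Equivalently: every positive rational number appears exactly once as a vertex of the Calkin-Wilf tree.) -/
/-!
Every value of the tree is positive, so a left step lands in `(0, 1)` and a right step in `(1, ∞)`,
while the root is `1`. The value of a word therefore determines its first letter, and both steps
are injective, which gives injectivity by induction on the word.

For surjectivity, a positive rational `a / b` is reached by the subtractive Euclidean algorithm,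
by induction on `a + b`: if `a < b` it is the left child of `a / (b - a)`, if `b < a` it is the
right child of `(a - b) / b`, and if `a = b` it is the root. The fraction need not be reduced.
-/

/-- The Calkin-Wilf tree as a map from binary words (paths from the root,
read from the leaf towards the root) to rationals: `false` is a left step,
`true` is a right step. -/
def calkinWilf : List Bool → ℚ
  | [] => 1
  | false :: w => calkinWilf w / (calkinWilf w + 1)
  | true :: w => calkinWilf w + 1

theorem calkinWilf_pos (w : List Bool) : 0 < calkinWilf w := by
  induction w with
  | nil => simp [calkinWilf]
  | cons b w ih => cases b <;> simp only [calkinWilf] <;> positivity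

theorem calkinWilf_false_lt_one (w : List Bool) : calkinWilf (false :: w) < 1 := by
  have h := calkinWilf_pos w
  rw [calkinWilf, div_lt_one (by positivity)]
  linarith

theorem one_lt_calkinWilf_true (w : List Bool) : 1 < calkinWilf (true :: w) := by
  have h := calkinWilf_pos w
  rw [calkinWilf]
  linarith

theorem calkinWilf_injective : Function.Injective calkinWilf := by
  intro v
  induction v with
  | nil =>
    intro w h
    rw [calkinWilf] at h
    match w with
    | [] => rfl
    | false :: w => exact absurd h (calkinWilf_false_lt_one w).ne'
    | true :: w => exact absurd h (one_lt_calkinWilf_true w).ne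
  | cons b v ih =>
    intro w h
    match b, w with
    | false, [] => exact absurd h (calkinWilf_false_lt_one v).ne
    | true, [] => exact absurd h (one_lt_calkinWilf_true v).ne'
    | false, true :: w =>
      exact absurd h ((calkinWilf_false_lt_one v).trans (one_lt_calkinWilf_true w)).ne
    | true, false :: w =>
      exact absurd h ((calkinWilf_false_lt_one w).trans (one_lt_calkinWilf_true v)).ne'
    | true, true :: w =>
      rw [calkinWilf, calkinWilf, add_left_inj] at h
      rw [ih h]
    | false, false :: w =>
      have hv := calkinWilf_pos v
      have hw := calkinWilf_pos w
      rw [calkinWilf, calkinWilf, div_eq_div_iff (by positivity) (by positivity)] at h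
      rw [ih (by linarith : calkinWilf v = calkinWilf w)]

/-- The subtractive Euclidean algorithm on `(a, b)`, with `n` bounding `a + b`. -/
theorem exists_calkinWilf_eq_div (n : ℕ) : ∀ a b : ℕ, 0 < a → 0 < b → a + b ≤ n →
    ∃ w, calkinWilf w = (a : ℚ) / b := by
  induction n with
  | zero => intro a b ha hb h; omega
  | succ n ih =>
    intro a b ha hb h
    have hb' : (0 : ℚ) < b := by exact_mod_cast hb
    rcases lt_trichotomy a b with hab | rfl | hab
    · obtain ⟨c, rfl⟩ := Nat.exists_eq_add_of_lt hab
      obtain ⟨w, hw⟩ := ih a (c + 1) ha (by omega) (by omega)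
      refine ⟨false :: w, ?_⟩
      rw [calkinWilf, hw]
      push_cast
      field_simp
      ring
    · exact ⟨[], by rw [calkinWilf, div_self hb'.ne']⟩
    · obtain ⟨c, rfl⟩ := Nat.exists_eq_add_of_lt hab
      obtain ⟨w, hw⟩ := ih (c + 1) b (by omega) hb (by omega)
      refine ⟨true :: w, ?_⟩
      rw [calkinWilf, hw]
      push_cast
      field_simp
      ring

theorem calkinWilf_injective_and_range :
    Function.Injective calkinWilf ∧ Set.range calkinWilf = {q : ℚ | 0 < q} := by
  refine ⟨calkinWilf_injective, Set.Subset.antisymm ?_ ?_⟩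
  · rintro _ ⟨w, rfl⟩
    exact calkinWilf_pos w
  · intro q (hq : 0 < q)
    have hnum : 0 < q.num := Rat.num_pos.2 hq
    obtain ⟨w, hw⟩ := exists_calkinWilf_eq_div _ q.num.toNat q.den (by omega) q.pos le_rfl
    refine ⟨w, ?_⟩
    have hcast : ((q.num.toNat : ℕ) : ℚ) = (q.num : ℚ) := by
      exact_mod_cast Int.toNat_of_nonneg hnum.le
    rw [hw, hcast, Rat.num_div_den]
end

section
/- For every n ≥ 1: c(n,1) = 1/(n+1), c(n,2^n) = n+1, and for every j with 1 ≤ j ≤ 2^n − 1, the denominator of c(n,j) equals the numerator of c(n,j+1) (both as positive integers, the rationals c(n,j) being in lowest terms). -/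
/-!
A positive rational `x = p / q` in lowest terms has children `p / (p + q)` and `(p + q) / q`, again
in lowest terms (`num_den_left`, `num_den_right`). Hence the denominator of the left child is the
numerator of the right child, which settles adjacent entries with a common parent. Otherwise the two
entries are the right child of some `x` and the left child of the right neighbour `y` of `x`; their
relevant denominator and numerator are those of `x` and `y`, so the claim follows by induction on the
row. The first and last entries follow from the recursions `x ↦ x / (x + 1)` and `x ↦ x + 1`.
Throughout, the entries are indexed from `0`, so that the children of entry `k` are the entries `2k`
and `2k + 1` of the next row.
-/

/-- Row `n` of the Calkin-Wilf tree, as a list of rationals. -/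
def cwRow : ℕ → List ℚ
  | 0 => [1]
  | n + 1 => (cwRow n).flatMap fun x => [x / (x + 1), x + 1]

/-- `c n j` is the `j`-th entry (1-indexed) of row `n` of the Calkin-Wilf tree. -/
def c (n j : ℕ) : ℚ := (cwRow n).getD (j - 1) 0

theorem num_den_right (x : ℚ) :
    (x + 1).num = x.num + x.den ∧ (x + 1).den = x.den := by
  have hd : (0 : ℤ) < x.den := by exact_mod_cast x.den_pos
  have hcop : Nat.Coprime (x.num + x.den).natAbs (x.den : ℤ).natAbs := by
    rw [← Int.isCoprime_iff_nat_coprime]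
    have h := Rat.isCoprime_num_den x
    simpa using h.add_mul_left_left 1
  have he : x + 1 = ((x.num + x.den : ℤ) : ℚ) / ((x.den : ℤ) : ℚ) := by
    have h := Rat.num_div_den x
    have hq : (x.den : ℚ) ≠ 0 := by exact_mod_cast x.den_ne_zero
    push_cast
    rw [add_div, h, div_self hq]
  constructor
  · rw [he, Rat.num_div_eq_of_coprime hd hcop]
  · have h := Rat.den_div_eq_of_coprime hd hcop
    rw [← he] at h
    exact_mod_cast h

theorem num_den_left {x : ℚ} (hx : 0 < x) :
    (x / (x + 1)).num = x.num ∧ ((x / (x + 1)).den : ℤ) = x.num + x.den := by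
  have hn : 0 < x.num := Rat.num_pos.2 hx
  have hd : (0 : ℤ) < x.num + x.den := by positivity
  have hcop : Nat.Coprime x.num.natAbs (x.num + x.den).natAbs := by
    rw [← Int.isCoprime_iff_nat_coprime]
    have h := Rat.isCoprime_num_den x
    simpa [add_comm] using h.add_mul_left_right 1
  have he : x / (x + 1) = (x.num : ℚ) / ((x.num + x.den : ℤ) : ℚ) := by
    have h := Rat.num_div_den x
    have hq : (x.den : ℚ) ≠ 0 := by exact_mod_cast x.den_ne_zero
    have hd' : ((x.num : ℚ) + x.den) ≠ 0 := by exact_mod_cast hd.ne'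
    have hm : (x.num : ℚ) = x * x.den := (div_eq_iff hq).1 h
    push_cast
    rw [div_eq_div_iff (by positivity) hd', hm]
    ring
  rw [he]
  exact ⟨Rat.num_div_eq_of_coprime hd hcop, Rat.den_div_eq_of_coprime hd hcop⟩

theorem length_cwRow (n : ℕ) : (cwRow n).length = 2 ^ n := by
  induction n with
  | zero => rfl
  | succ n ih => simp [cwRow, List.length_flatMap, ih, pow_succ]

theorem cwRow_pos (n : ℕ) : ∀ x ∈ cwRow n, 0 < x := by
  induction n with
  | zero => simp [cwRow]
  | succ n ih =>
    intro x hx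
    simp only [cwRow, List.mem_flatMap, List.mem_cons, List.not_mem_nil, or_false] at hx
    obtain ⟨y, hy, rfl | rfl⟩ := hx <;> have := ih y hy <;> positivity

theorem getD_flatMap_pair (f g : ℚ → ℚ) (l : List ℚ) (k : ℕ) (hk : k < l.length) :
    (l.flatMap fun x => [f x, g x]).getD (2 * k) 0 = f (l.getD k 0) ∧
      (l.flatMap fun x => [f x, g x]).getD (2 * k + 1) 0 = g (l.getD k 0) := by
  induction l generalizing k with
  | nil => simp at hk
  | cons a l ih =>
    cases k with
    | zero => simp
    | succ k =>
      have := ih k (by simpa using hk)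
      simpa [mul_add] using this

theorem cwRow_succ_even {n k : ℕ} (hk : k < 2 ^ n) :
    (cwRow (n + 1)).getD (2 * k) 0 = (cwRow n).getD k 0 / ((cwRow n).getD k 0 + 1) :=
  (getD_flatMap_pair (fun x => x / (x + 1)) (fun x => x + 1) _ k (by rwa [length_cwRow])).1

theorem cwRow_succ_odd {n k : ℕ} (hk : k < 2 ^ n) :
    (cwRow (n + 1)).getD (2 * k + 1) 0 = (cwRow n).getD k 0 + 1 :=
  (getD_flatMap_pair (fun x => x / (x + 1)) (fun x => x + 1) _ k (by rwa [length_cwRow])).2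

theorem cwRow_getD_pos {n k : ℕ} (hk : k < 2 ^ n) : 0 < (cwRow n).getD k 0 := by
  have hk' : k < (cwRow n).length := by rwa [length_cwRow]
  rw [List.getD_eq_getElem _ _ hk']
  exact cwRow_pos n _ (List.getElem_mem hk')

theorem cwRow_first (n : ℕ) : (cwRow n).getD 0 0 = 1 / (n + 1) := by
  induction n with
  | zero => simp [cwRow]
  | succ n ih =>
    have h := cwRow_succ_even (n := n) (k := 0) (by positivity)
    rw [mul_zero, ih] at h
    rw [h]
    push_cast
    field_simp
    ring

theorem cwRow_last (n : ℕ) : (cwRow n).getD (2 ^ n - 1) 0 = n + 1 := by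
  induction n with
  | zero => simp [cwRow]
  | succ n ih =>
    have hp : 0 < 2 ^ n := by positivity
    have h := cwRow_succ_odd (n := n) (k := 2 ^ n - 1) (by omega)
    rw [ih] at h
    rw [show 2 ^ (n + 1) - 1 = 2 * (2 ^ n - 1) + 1 by rw [pow_succ]; omega, h]
    push_cast
    rfl

theorem cwRow_den_eq_num (n : ℕ) : ∀ i, i + 1 < 2 ^ n →
    (((cwRow n).getD i 0).den : ℤ) = ((cwRow n).getD (i + 1) 0).num := by
  induction n with
  | zero => intro i hi; simp at hi
  | succ n ih =>
    intro i hi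
    rw [pow_succ] at hi
    obtain ⟨k, rfl | rfl⟩ := Nat.even_or_odd' i
    · have hk : k < 2 ^ n := by omega
      rw [cwRow_succ_even hk, cwRow_succ_odd hk, (num_den_left (cwRow_getD_pos hk)).2,
        (num_den_right _).1]
    · have hk : k < 2 ^ n := by omega
      have hk1 : k + 1 < 2 ^ n := by omega
      rw [show 2 * k + 1 + 1 = 2 * (k + 1) by ring, cwRow_succ_odd hk, cwRow_succ_even hk1,
        (num_den_right _).2, (num_den_left (cwRow_getD_pos hk1)).1]
      exact ih k hk1

theorem denominator_numerator_formula (n : ℕ) (hn : 1 ≤ n) :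
    c n 1 = 1 / (n + 1) ∧ c n (2 ^ n) = n + 1 ∧
      ∀ j, 1 ≤ j → j ≤ 2 ^ n - 1 → ((c n j).den : ℤ) = (c n (j + 1)).num := by
  refine ⟨cwRow_first n, cwRow_last n, fun j hj hj' => ?_⟩
  obtain ⟨i, rfl⟩ := Nat.exists_eq_add_of_le' hj
  exact cwRow_den_eq_num n i (by omega)
end

section
/- For every positive integer n and every j with 1 ≤ j ≤ 2^n − 1, we have c(n,j+1) = 1/(2·⌊c(n,j)⌋ + 1 − c(n,j)), where ⌊x⌋ denotes the integer part (floor) of the rational number x. -/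
/-- Newman's successor map, sending each entry of a row to the next one. -/
def newman (x : ℚ) : ℚ := 1 / (2 * (⌊x⌋ : ℚ) + 1 - x)

theorem newman_children {x : ℚ} (hx : 0 < x) : newman (x / (x + 1)) = x + 1 := by
  have hfloor : ⌊x / (x + 1)⌋ = 0 := by
    rw [Int.floor_eq_zero_iff]
    exact ⟨by positivity, by rw [div_lt_one (by positivity)]; linarith⟩
  have hne : x + 1 ≠ 0 := by positivity
  have hden : 2 * ((0 : ℤ) : ℚ) + 1 - x / (x + 1) = 1 / (x + 1) := by
    push_cast
    field_simp
    ring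
  rw [newman, hfloor, hden, one_div_one_div]

theorem newman_cousins {x : ℚ} (hx : 0 < x) :
    newman (x + 1) = newman x / (newman x + 1) := by
  have hfloor : (0 : ℚ) ≤ ⌊x⌋ := by exact_mod_cast Int.floor_nonneg.2 hx.le
  have hlt := Int.lt_floor_add_one x
  have hd : 2 * (⌊x⌋ : ℚ) + 1 - x ≠ 0 := by linarith
  have hd' : 2 * (⌊x⌋ : ℚ) + 2 - x ≠ 0 := by linarith
  have hsum : newman x + 1 = (2 * (⌊x⌋ : ℚ) + 2 - x) / (2 * (⌊x⌋ : ℚ) + 1 - x) := by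
    rw [newman, eq_div_iff hd, add_mul, one_div_mul_cancel hd]
    ring
  rw [hsum, newman, newman, Int.floor_add_one, div_div_div_cancel_right₀ hd]
  push_cast
  ring_nf

theorem isChain_children (l : List ℚ) (hpos : ∀ x ∈ l, 0 < x)
    (hl : l.IsChain fun x y => y = newman x) :
    (l.flatMap fun x => [x / (x + 1), x + 1]).IsChain fun x y => y = newman x := by
  induction l with
  | nil => simp
  | cons x l ih =>
    have hx : 0 < x := hpos x (by simp)
    cases l with
    | nil => simp [newman_children hx]
    | cons y l =>
      rw [List.isChain_cons_cons] at hl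
      have htail := ih (fun z hz => hpos z (List.mem_cons_of_mem _ hz)) hl.2
      simp only [List.flatMap_cons, List.cons_append, List.nil_append,
        List.isChain_cons_cons] at htail ⊢
      exact ⟨(newman_children hx).symm, by rw [newman_cousins hx, hl.1], htail⟩

theorem isChain_cwRow (n : ℕ) : (cwRow n).IsChain fun x y => y = newman x := by
  induction n with
  | zero => simp [cwRow]
  | succ n ih => exact isChain_children _ (cwRow_pos n) ih

theorem successor_formula (n j : ℕ) (hn : 1 ≤ n) (h1 : 1 ≤ j) (h2 : j ≤ 2 ^ n - 1) :
    c n (j + 1) = 1 / (2 * (⌊c n j⌋ : ℚ) + 1 - c n j) := by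
  obtain ⟨i, rfl⟩ := Nat.exists_eq_add_of_le' h1
  have hi : i + 1 < (cwRow n).length := by
    rw [length_cwRow]
    have := Nat.one_le_two_pow (n := n)
    omega
  have hstep := List.isChain_iff_getElem.1 (isChain_cwRow n) i hi
  simp only [c, Nat.add_sub_cancel, List.getD_eq_getElem _ _ hi,
    List.getD_eq_getElem _ _ (Nat.lt_of_succ_lt hi)]
  exact hstep
end

section
/- Define P : List Bool → Matrix (Fin 2) (Fin 2) ℤ by P([]) = identity matrix and P(b :: w) = (if b then R1 else L1) * P(w). Then P is injective, and the range of P is exactly the set of 2×2 integer matrices with all entries nonnegative and determinant 1. (Equivalently: the monoid SL2(ℕ₀) of 2×2 nonnegative integer matrices of determinant 1 is a free monoid of rank 2, freely generated by {L1, R1}.) -/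
/-!
Left multiplication by `R1` adds the bottom row to the top one, and by `L1` the top row to the
bottom one. In a nonnegative matrix of determinant 1 both row sums are positive, so comparing the
two row sums of `P w` reveals the first letter of `w` (top larger: `R1`; bottom larger: `L1`; equal:
`w = []`). Both generators are left-cancellable, which gives injectivity.

For surjectivity, let `M = !![a, b; c, d]` be nonnegative with determinant 1. If one row dominates
the other entrywise, subtracting the smaller row removes a letter and decreases the sum of the
entries. Otherwise `a > c` and `b < d` (the opposite pattern makes the determinant negative), so
`1 = a * d - b * c ≥ (c + 1) * (b + 1) - b * c = b + c + 1`, which forces `M = 1`.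
-/

def L1 : Matrix (Fin 2) (Fin 2) ℤ := !![1, 0; 1, 1]

def R1 : Matrix (Fin 2) (Fin 2) ℤ := !![1, 1; 0, 1]

/-- The matrix associated to a binary word: products of `L1` and `R1`. -/
def P : List Bool → Matrix (Fin 2) (Fin 2) ℤ
  | [] => 1
  | b :: w => (if b then R1 else L1) * P w

lemma R1_mul_of (a b c d : ℤ) : R1 * !![a, b; c, d] = !![a + c, b + d; c, d] := by
  simp [R1]

lemma L1_mul_of (a b c d : ℤ) : L1 * !![a, b; c, d] = !![a, b; a + c, b + d] := by
  simp [L1]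

/-- The form in which membership of `P w` in the monoid is used: its entries, together with
positivity of both row sums. -/
lemma exists_entries_P (w : List Bool) : ∃ a b c d : ℤ, P w = !![a, b; c, d] ∧
    0 ≤ a ∧ 0 ≤ b ∧ 0 ≤ c ∧ 0 ≤ d ∧ a * d - b * c = 1 ∧ 0 < a + b ∧ 0 < c + d := by
  induction w with
  | nil => exact ⟨1, 0, 0, 1, by simp [P, Matrix.one_fin_two], by norm_num⟩
  | cons x w ih =>
    obtain ⟨a, b, c, d, h, ha, hb, hc, hd, hdet, hab, hcd⟩ := ih
    cases x
    · refine ⟨a, b, a + c, b + d, by simp [P, h, L1_mul_of], ha, hb, by omega, by omega, ?_,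
        by omega, by omega⟩
      linear_combination hdet
    · refine ⟨a + c, b + d, c, d, by simp [P, h, R1_mul_of], by omega, by omega, hc, hd, ?_,
        by omega, by omega⟩
      linear_combination hdet

/-- Top row sum minus bottom row sum; its sign detects the first letter of a word. -/
def rowDiff (M : Matrix (Fin 2) (Fin 2) ℤ) : ℤ := M 0 0 + M 0 1 - (M 1 0 + M 1 1)

lemma rowDiff_P_nil : rowDiff (P []) = 0 := by
  simp [rowDiff, P]

lemma rowDiff_P_true (w : List Bool) : 0 < rowDiff (P (true :: w)) := by
  obtain ⟨a, b, c, d, h, -, -, -, -, -, hab, hcd⟩ := exists_entries_P w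
  simp [rowDiff, P, h, R1_mul_of]
  omega

lemma rowDiff_P_false (w : List Bool) : rowDiff (P (false :: w)) < 0 := by
  obtain ⟨a, b, c, d, h, -, -, -, -, -, hab, hcd⟩ := exists_entries_P w
  simp [rowDiff, P, h, L1_mul_of]
  omega

lemma P_cons_cancel (x : Bool) (v w : List Bool) (h : P (x :: v) = P (x :: w)) : P v = P w := by
  obtain ⟨a, b, c, d, hv, -⟩ := exists_entries_P v
  obtain ⟨a', b', c', d', hw, -⟩ := exists_entries_P w
  cases x <;> simp [P, hv, hw, R1_mul_of, L1_mul_of] at h ⊢ <;> omega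

lemma P_injective : Function.Injective P := by
  intro v
  induction v with
  | nil =>
    rintro (_ | ⟨_ | _, w⟩) h
    · rfl
    · have := rowDiff_P_false w
      rw [← h, rowDiff_P_nil] at this
      omega
    · have := rowDiff_P_true w
      rw [← h, rowDiff_P_nil] at this
      omega
  | cons x v ih =>
    have ht := rowDiff_P_true v
    have hf := rowDiff_P_false v
    rintro (_ | ⟨y, w⟩) h
    · cases x <;> simp only [h, rowDiff_P_nil] at ht hf <;> omega
    · have ht' := rowDiff_P_true w
      have hf' := rowDiff_P_false w
      obtain rfl : x = y := by
        cases x <;> cases y <;>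
          first | rfl | (rw [h] at hf; omega) | (rw [h] at ht; omega)
      rw [ih (P_cons_cancel x v w h)]

/-- Descent on a bound `n` for the sum of the entries. -/
lemma exists_word (n : ℕ) : ∀ a b c d : ℤ, 0 ≤ a → 0 ≤ b → 0 ≤ c → 0 ≤ d →
    a * d - b * c = 1 → a + b + c + d ≤ n → ∃ w, P w = !![a, b; c, d] := by
  induction n with
  | zero =>
    intro a b c d ha hb hc hd hdet hn
    obtain rfl : a = 0 := by push_cast at hn; omega
    obtain rfl : b = 0 := by push_cast at hn; omega
    simp at hdet
  | succ n ih =>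
    intro a b c d ha hb hc hd hdet hn
    push_cast at hn
    have hab : 0 < a + b := by
      by_contra hneg
      obtain rfl : a = 0 := by omega
      obtain rfl : b = 0 := by omega
      simp at hdet
    have hcd : 0 < c + d := by
      by_contra hneg
      obtain rfl : c = 0 := by omega
      obtain rfl : d = 0 := by omega
      simp at hdet
    rcases le_or_gt c a with hac | hac <;> rcases le_or_gt d b with hbd | hbd
    · obtain ⟨w, hw⟩ := ih (a - c) (b - d) c d (by omega) (by omega) hc hd
        (by linear_combination hdet) (by omega)
      exact ⟨true :: w, by simp [P, hw, R1_mul_of]⟩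
    · rcases hac.eq_or_lt with rfl | hac
      · obtain ⟨w, hw⟩ := ih c b 0 (d - b) ha hb le_rfl (by omega)
          (by linear_combination hdet) (by omega)
        exact ⟨false :: w, by simp [P, hw, L1_mul_of]⟩
      · have hbc : b + c ≤ 0 := by
          nlinarith [mul_nonneg (show 0 ≤ a - c - 1 by omega) hd,
            mul_nonneg (show 0 ≤ d - b - 1 by omega) hc]
        obtain rfl : b = 0 := by omega
        obtain rfl : c = 0 := by omega
        have had : a * d = 1 := by linarith
        obtain rfl : a = 1 := Int.eq_one_of_mul_eq_one_right ha had
        obtain rfl : d = 1 := by omega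
        exact ⟨[], by simp [P, Matrix.one_fin_two]⟩
    · nlinarith [mul_nonneg (show 0 ≤ c - a by omega) hd,
        mul_nonneg (show 0 ≤ b - d by omega) hc]
    · obtain ⟨w, hw⟩ := ih a b (c - a) (d - b) ha hb (by omega) (by omega)
        (by linear_combination hdet) (by omega)
      exact ⟨false :: w, by simp [P, hw, L1_mul_of]⟩

theorem SL2N_free_monoid :
    Function.Injective P ∧
      Set.range P = {M : Matrix (Fin 2) (Fin 2) ℤ | (∀ i j, 0 ≤ M i j) ∧ M.det = 1} := by
  refine ⟨P_injective, Set.ext fun M => ⟨?_, ?_⟩⟩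
  · rintro ⟨w, rfl⟩
    obtain ⟨a, b, c, d, h, ha, hb, hc, hd, hdet, -⟩ := exists_entries_P w
    refine ⟨?_, by rw [h, Matrix.det_fin_two_of, hdet]⟩
    rw [h]
    intro i j
    fin_cases i <;> fin_cases j <;> simpa
  · rintro ⟨hM, hdet⟩
    rw [Matrix.det_fin_two] at hdet
    obtain ⟨w, hw⟩ := exists_word (M 0 0 + M 0 1 + M 1 0 + M 1 1).toNat _ _ _ _
      (hM 0 0) (hM 0 1) (hM 1 0) (hM 1 1) hdet (Int.self_le_toNat _)
    exact ⟨w, hw.trans (Matrix.eta_fin_two M).symm⟩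
end

section
/- Let a, b, c, d be nonnegative integers with a·d − b·c = 1. If the rows of the matrix !![a,b;c,d] are incomparable, i.e., (a < c and d < b) or (c < a and b < d), then a = 1, b = 0, c = 0, d = 1, i.e., the matrix is the identity. (The only orphan special positive linear fractional transformation is z.) -/
theorem only_special_orphan_is_identity (a b c d : ℕ)
    (hdet : (a : ℤ) * d - b * c = 1)
    (horphan : (a < c ∧ d < b) ∨ (c < a ∧ b < d)) :
    a = 1 ∧ b = 0 ∧ c = 0 ∧ d = 1 := by
  have h : a * d = b * c + 1 := by
    zify
    linarith
  rcases horphan with ⟨hac, hdb⟩ | ⟨hca, hbd⟩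
  · have hle : a * d ≤ c * b := Nat.mul_le_mul hac.le hdb.le
    linarith [mul_comm b c]
  · -- Since `(c + 1) * (b + 1) ≤ a * d = b * c + 1`, the sum `b + c` vanishes.
    have hle : (c + 1) * (b + 1) ≤ a * d := Nat.mul_le_mul hca hbd
    have hb : b = 0 := by nlinarith
    have hc : c = 0 := by nlinarith
    subst hb hc
    have had : a * d = 1 := by simpa using h
    exact ⟨Nat.eq_one_of_mul_eq_one_right had, rfl, rfl, Nat.eq_one_of_mul_eq_one_left had⟩
end

section
/- For every n ≥ 1 and every j with 1 ≤ j ≤ 2^n − 1, the second row of W(n,j) equals the first row of W(n,j+1); that is, W(n,j)₍₁,₀₎ = W(n,j+1)₍₀,₀₎ and W(n,j)₍₁,₁₎ = W(n,j+1)₍₀,₁₎. (Denominator-numerator formula: the denominator of each linear fractional transformation in a row of the tree is the numerator of the next one.) -/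
/-- Row `n` of the matrix tree, as a list of matrices. -/
def mRow : ℕ → List (Matrix (Fin 2) (Fin 2) ℤ)
  | 0 => [1]
  | n + 1 => (mRow n).flatMap fun M => [L1 * M, R1 * M]

/-- `W n j` is the `j`-th entry (1-indexed) of row `n` of the matrix tree. -/
def W (n j : ℕ) : Matrix (Fin 2) (Fin 2) ℤ := (mRow n).getD (j - 1) 0

/-- The second row of `A` is the first row of `B`. -/
def RowsLink (A B : Matrix (Fin 2) (Fin 2) ℤ) : Prop := A 1 0 = B 0 0 ∧ A 1 1 = B 0 1

theorem rowsLink_siblings (M : Matrix (Fin 2) (Fin 2) ℤ) : RowsLink (L1 * M) (R1 * M) := by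
  simp [RowsLink, L1, R1, Matrix.mul_apply, Fin.sum_univ_two]

theorem rowsLink_cousins {M N : Matrix (Fin 2) (Fin 2) ℤ} (h : RowsLink M N) :
    RowsLink (R1 * M) (L1 * N) := by
  simpa [RowsLink, L1, R1, Matrix.mul_apply, Fin.sum_univ_two] using h

theorem isChain_children_s7 (l : List (Matrix (Fin 2) (Fin 2) ℤ)) (h : l.IsChain RowsLink) :
    (l.flatMap fun M => [L1 * M, R1 * M]).IsChain RowsLink := by
  induction l with
  | nil => simp
  | cons M l ih =>
    cases l with
    | nil => simpa using rowsLink_siblings M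
    | cons N l =>
      rw [List.isChain_cons_cons] at h
      have ih := ih h.2
      simp only [List.flatMap_cons, List.cons_append, List.nil_append] at ih ⊢
      exact .cons_cons (rowsLink_siblings M) (.cons_cons (rowsLink_cousins h.1) ih)

theorem isChain_mRow (n : ℕ) : (mRow n).IsChain RowsLink := by
  induction n with
  | zero => simp [mRow]
  | succ n ih => exact isChain_children_s7 _ ih

theorem length_mRow (n : ℕ) : (mRow n).length = 2 ^ n := by
  induction n with
  | zero => simp [mRow]
  | succ n ih => simp [mRow, List.length_flatMap, ih, pow_succ]

theorem matrix_denominator_numerator_formula (n j : ℕ) (hn : 1 ≤ n)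
    (h1 : 1 ≤ j) (h2 : j ≤ 2 ^ n - 1) :
    W n j 1 0 = W n (j + 1) 0 0 ∧ W n j 1 1 = W n (j + 1) 0 1 := by
  obtain ⟨i, rfl⟩ : ∃ i, j = i + 1 := ⟨j - 1, by omega⟩
  have hlen : i + 1 < (mRow n).length := by rw [length_mRow]; omega
  have h := List.isChain_iff_getElem.mp (isChain_mRow n) i hlen
  simpa [W, RowsLink, List.getElem?_eq_getElem hlen,
    List.getElem?_eq_getElem (Nat.lt_of_succ_lt hlen)] using h
end

section
/- Let K be a field of characteristic 0 and let z ∈ K. Define the relation r on K by r x y ↔ (y = x + 1) ∨ (x + 1 ≠ 0 ∧ y = x/(x+1)). Then −1 is reachable from z under the reflexive transitive closure of r if and only if z is a negative rational number, i.e., there exists q : ℚ with q < 0 and z = (q : K). (Consequently, an element of K is the root of a rooted infinite binary tree under the generation rule w ↦ {w/(w+1), w+1} if and only if it is not a negative rational number.) -/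
/-!
Both moves `x ↦ x + 1` and `x ↦ x / (x + 1)` are injective, with inverses `y ↦ y - 1` and
`y ↦ y / (1 - y)`, and these inverses preserve the negative rationals; hence everything that
reaches `-1` is a negative rational. Conversely, on `-(a / b)` with `a, b` positive integers, the
moves perform the subtractive Euclidean algorithm: the first sends `(a, b)` to `(a - b, b)` if
`a > b`, and the second sends it to `(a, b - a)` if `a < b`. The process stops at `a = b`,
that is, at `-1` (`reaches_neg_one_of_pos`).
-/

/-- The subtractive Euclidean algorithm, by induction on a bound `n` for `a + b`. -/
lemma reaches_neg_one_of_pos (K : Type*) [Field K] [CharZero K] (n : ℕ) :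
    ∀ a b : ℕ, 0 < a → 0 < b → a + b ≤ n →
      Relation.ReflTransGen
        (fun x y : K => y = x + 1 ∨ (x + 1 ≠ 0 ∧ y = x / (x + 1))) (-((a : K) / b)) (-1) := by
  induction n with
  | zero => intro a b ha hb h; omega
  | succ n ih =>
    intro a b ha hb h
    have hbK : (b : K) ≠ 0 := by exact_mod_cast hb.ne'
    rcases lt_trichotomy a b with hab | rfl | hab
    · obtain ⟨c, rfl⟩ := Nat.exists_eq_add_of_lt hab
      have hcK : ((c + 1 : ℕ) : K) ≠ 0 := by exact_mod_cast c.succ_ne_zero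
      have e : -((a : K) / (a + c + 1 : ℕ)) + 1 = (c + 1 : ℕ) / (a + c + 1 : ℕ) := by
        field_simp
        push_cast
        ring
      refine Relation.ReflTransGen.head (Or.inr ⟨?_, ?_⟩) (ih a (c + 1) ha (by omega) (by omega))
      · rw [e]
        exact div_ne_zero hcK hbK
      · rw [e]
        field_simp
    · rw [div_self hbK]
    · obtain ⟨c, rfl⟩ := Nat.exists_eq_add_of_lt hab
      refine Relation.ReflTransGen.head (Or.inl ?_) (ih (c + 1) b (by omega) hb (by omega))
      field_simp
      push_cast
      ring

theorem reaches_neg_one_iff_negative_rational (K : Type*) [Field K] [CharZero K] (z : K) :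
    Relation.ReflTransGen
        (fun x y : K => y = x + 1 ∨ (x + 1 ≠ 0 ∧ y = x / (x + 1))) z (-1) ↔
      ∃ q : ℚ, q < 0 ∧ z = (q : K) := by
  constructor
  · intro h
    induction h using Relation.ReflTransGen.head_induction_on with
    | refl => exact ⟨-1, by norm_num, by norm_num⟩
    | head hxy _ ih =>
      obtain ⟨q, hq, rfl⟩ := ih
      rcases hxy with hx | ⟨hne, hx⟩
      · exact ⟨q - 1, by linarith, by push_cast; rw [hx]; ring⟩
      · have hq1 : (1 - q : ℚ) ≠ 0 := by linarith
        have hqK : (1 - q : K) ≠ 0 := by exact_mod_cast hq1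
        refine ⟨q / (1 - q), div_neg_of_neg_of_pos hq (by linarith), ?_⟩
        push_cast
        rw [eq_div_iff hne] at hx
        rw [eq_div_iff hqK]
        linear_combination -hx
  · rintro ⟨q, hq, rfl⟩
    have hnum : q.num < 0 := Rat.num_neg.mpr hq
    have key := reaches_neg_one_of_pos K _ q.num.natAbs q.den (by omega) q.den_pos le_rfl
    have e : (q : K) = -((q.num.natAbs : K) / q.den) := by
      have h1 : ((q.num.natAbs : ℤ) : K) = ((-q.num : ℤ) : K) := by
        congr 1
        omega
      rw [Rat.cast_def, ← Int.cast_natCast q.num.natAbs, h1]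
      push_cast
      ring
    rw [e]
    exact key
end

section
/- For every nonnegative integer n and every j with 1 ≤ j ≤ 2^n, writing W(n,j) = !![a,b;c,d], we have c(n,j) = (a + b)/(c + d) as rational numbers. (Evaluating the tree of special positive linear fractional transformations at z = 1 yields the Calkin-Wilf tree: w_{n,j}(1) = c_{n,j}.) -/
/-- The value at `z = 1` of the linear fractional transformation with matrix `M`. -/
def evalOne (M : Matrix (Fin 2) (Fin 2) ℤ) : ℚ :=
  ((M 0 0 + M 0 1 : ℤ) : ℚ) / ((M 1 0 + M 1 1 : ℤ) : ℚ)

theorem mRow_pos (n : ℕ) :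
    ∀ M ∈ mRow n, 0 < M 0 0 + M 0 1 ∧ 0 < M 1 0 + M 1 1 := by
  induction n with
  | zero => simp [mRow]
  | succ n ih =>
    intro M hM
    simp only [mRow, List.mem_flatMap, List.mem_cons, List.not_mem_nil, or_false] at hM
    obtain ⟨N, hN, rfl | rfl⟩ := hM <;> obtain ⟨hp, hq⟩ := ih N hN <;>
      simp [L1, R1, Matrix.mul_apply, Fin.sum_univ_two] <;> constructor <;> linarith

theorem evalOne_L1_mul (M : Matrix (Fin 2) (Fin 2) ℤ)
    (hp : 0 < M 0 0 + M 0 1) (hq : 0 < M 1 0 + M 1 1) :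
    evalOne (L1 * M) = evalOne M / (evalOne M + 1) := by
  have hp' : (0 : ℚ) < M 0 0 + M 0 1 := by exact_mod_cast hp
  have hq' : (0 : ℚ) < M 1 0 + M 1 1 := by exact_mod_cast hq
  have hL : evalOne (L1 * M) =
      (M 0 0 + M 0 1 : ℚ) / ((M 0 0 + M 0 1 : ℚ) + (M 1 0 + M 1 1 : ℚ)) := by
    simp [evalOne, L1, Matrix.mul_apply, Fin.sum_univ_two]
    ring
  rw [hL]
  simp only [evalOne, Int.cast_add]
  generalize (M 0 0 + M 0 1 : ℚ) = p at *
  generalize (M 1 0 + M 1 1 : ℚ) = q at *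
  field_simp

theorem evalOne_R1_mul (M : Matrix (Fin 2) (Fin 2) ℤ) (hq : 0 < M 1 0 + M 1 1) :
    evalOne (R1 * M) = evalOne M + 1 := by
  have hq' : (0 : ℚ) < M 1 0 + M 1 1 := by exact_mod_cast hq
  have hR : evalOne (R1 * M) =
      ((M 0 0 + M 0 1 : ℚ) + (M 1 0 + M 1 1 : ℚ)) / (M 1 0 + M 1 1 : ℚ) := by
    simp [evalOne, R1, Matrix.mul_apply, Fin.sum_univ_two]
    ring
  rw [hR, add_div, div_self hq'.ne']
  simp [evalOne]

theorem cwRow_eq_map (n : ℕ) : cwRow n = (mRow n).map evalOne := by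
  induction n with
  | zero => simp [cwRow, mRow, evalOne]
  | succ n ih =>
    simp only [cwRow, mRow, ih, List.flatMap_map, List.map_flatMap]
    refine List.flatMap_congr fun M hM => ?_
    obtain ⟨hp, hq⟩ := mRow_pos n M hM
    simp [evalOne_L1_mul M hp hq, evalOne_R1_mul M hq]

theorem evaluation_at_one (n j : ℕ) (h1 : 1 ≤ j) (h2 : j ≤ 2 ^ n) :
    c n j = ((W n j 0 0 + W n j 0 1 : ℤ) : ℚ) / ((W n j 1 0 + W n j 1 1 : ℤ) : ℚ) := by
  -- The default entries match as well, because `0 / 0 = 0` in `ℚ`.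
  have h0 : evalOne 0 = 0 := by simp [evalOne]
  change (cwRow n).getD (j - 1) 0 = evalOne ((mRow n).getD (j - 1) 0)
  rw [cwRow_eq_map, ← h0, List.getD_map]
end
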